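/- Let P be a finite super logic program with least static expansion \overline{P}, and let N_P be the fixed point of the iteration of Λ_P starting from Def. Then a reduced interpretation I_obj ∪ I_def is the reduct of some (full) model of \overline{P} if and only if I_def ∈ N_P and I_obj ∪ I_def is a model of P. -/

import Mathlib

/-!
The least static expansion is a least fixed point. The formulas that `CnNot (T ∪ X)` adds to `T`,
for `X` a set of default atoms, only constrain default atoms. So any model of `T` that has the
default part of a model of `CnNot (T ∪ X)` is itself a model of it (`CnNot.satTheory_of_dflt_eq`),
and minimal models of such a theory are its `T`-minimal models. Replacing minimal models by
`T`-minimal ones makes the operator defining static expansions monotone, with the same fixed points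
(`isStaticExpansion_iff`). By Knaster–Tarski, the least static expansion is contained in every
prefixed point of the new operator (`IsLeastStaticExpansion.subset_of_le`).

Models of the least expansion reduce into every iterate `D` of `Λ_P`, by induction. Given a model
with default part `Id`, let `O'` be the set of `Io ∈ Φ_P(D)` that falsify every conjunction `E'`
with `Id E'`. If no element of `O'` satisfied a conjunction `E` with `¬ Id E`, then `E` would imply,
throughout the finite set `Φ_P(D)`, a finite disjunction `G` of such `E'`. Then `¬(E ∧ ¬G)` holds in
all minimal models, `not(E ∧ ¬G)` belongs to the expansion, and together with `not G` it yields
`not E`. Hence `Id` is given by `O'`.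

Conversely, a fixed point of `Λ_P` carries a Kripke structure: the worlds are the pairs `(Io, Id)`
with `Id` in the fixed point and `Io ∪ Id` a model of `P`; from `(Io, Id)` one sees minimal models
of `P` whose objective parts form a set giving `Id`. Reading `not F` as falsity of `F` in all worlds
seen turns worlds into full interpretations, and the formulas true in all worlds form a prefixed
point of the monotone operator.
-/

/-- Formulas of the modal language `L_not` over the set `At` of objective atoms.
`not F` is the default negation atom for a formula `F` (arbitrary nesting allowed). -/
inductive Fml (At : Type) : Type
  | atom : At → Fml At
  | tru : Fml At
  | fls : Fml At
  | neg : Fml At → Fml At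
  | conj : Fml At → Fml At → Fml At
  | disj : Fml At → Fml At → Fml At
  | impl : Fml At → Fml At → Fml At
  | equiv : Fml At → Fml At → Fml At
  | not : Fml At → Fml At

/-- An interpretation of `L_not`: a truth value for every objective atom and for
every default atom `not F` (the latter treated as new propositional atoms). -/
structure Interp (At : Type) where
  obj : At → Prop
  dflt : Fml At → Prop

/-- Classical satisfaction of a formula by an interpretation. -/
def Interp.sat {At : Type} (I : Interp At) : Fml At → Prop
  | Fml.atom a => I.obj a
  | Fml.tru => True
  | Fml.fls => False
  | Fml.neg F => ¬ Interp.sat I F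
  | Fml.conj F G => Interp.sat I F ∧ Interp.sat I G
  | Fml.disj F G => Interp.sat I F ∨ Interp.sat I G
  | Fml.impl F G => Interp.sat I F → Interp.sat I G
  | Fml.equiv F G => (Interp.sat I F ↔ Interp.sat I G)
  | Fml.not F => I.dflt F

/-- `I` is a model of the theory `T`. -/
def Interp.satTheory {At : Type} (I : Interp At) (T : Set (Fml At)) : Prop :=
  ∀ F ∈ T, I.sat F

/-- A set `S` contains `T`, the axioms (CA) and (DA), and is closed under
classical propositional consequence and the invariance rule (IR). -/
def CnClosed {At : Type} (T S : Set (Fml At)) : Prop :=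
  T ⊆ S ∧
  Fml.not Fml.fls ∈ S ∧
  Fml.neg (Fml.not Fml.tru) ∈ S ∧
  (∀ F G : Fml At,
    Fml.equiv (Fml.not (Fml.disj F G)) (Fml.conj (Fml.not F) (Fml.not G)) ∈ S) ∧
  (∀ F : Fml At, (∀ I : Interp At, I.satTheory S → I.sat F) → F ∈ S) ∧
  (∀ F G : Fml At, Fml.equiv F G ∈ S → Fml.equiv (Fml.not F) (Fml.not G) ∈ S)

/-- `Cn_not(T)`: the smallest set of formulas containing `T`, the axioms (CA), (DA),
closed under propositional consequence and the invariance rule (IR). -/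
def CnNot {At : Type} (T : Set (Fml At)) : Set (Fml At) :=
  ⋂₀ {S | CnClosed T S}

/-- `M` is smaller than `N`: they agree on all default atoms and the objective atoms
true in `M` form a proper subset of those true in `N`. -/
def Smaller {At : Type} (M N : Interp At) : Prop :=
  M.dflt = N.dflt ∧ {a | M.obj a} ⊂ {a | N.obj a}

/-- `M` is a minimal model of `T`. -/
def IsMinModel {At : Type} (T : Set (Fml At)) (M : Interp At) : Prop :=
  M.satTheory T ∧ ∀ N : Interp At, N.satTheory T → ¬ Smaller N M

/-- `T ⊨_min F`: `F` is true in all minimal models of `T`. -/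
def MinEntails {At : Type} (T : Set (Fml At)) (F : Fml At) : Prop :=
  ∀ M : Interp At, IsMinModel T M → M.sat F

/-- `Td` is a static expansion of `T`. -/
def IsStaticExpansion {At : Type} (T Td : Set (Fml At)) : Prop :=
  Td = CnNot (T ∪ {G | ∃ F : Fml At, MinEntails Td (Fml.neg F) ∧ G = Fml.not F})

/-- `Tbar` is the least static expansion of `T`. -/
def IsLeastStaticExpansion {At : Type} (T Tbar : Set (Fml At)) : Prop :=
  IsStaticExpansion T Tbar ∧ ∀ Td : Set (Fml At), IsStaticExpansion T Td → Tbar ⊆ Td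

/-- A clause of a super logic program:
`A1 ∨ … ∨ Ak ← B1 ∧ … ∧ Bm ∧ not C1 ∧ … ∧ not Cn`, where the `Ai` (head) and
`Bi` (posBody) are objective atoms and the `Ci` (negBody) are finite
conjunctions of objective atoms. -/
structure Clause (At : Type) where
  head : List At
  posBody : List At
  negBody : List (List At)

/-- Valuations of the objective atoms (`Obj`). -/
abbrev ObjVal (At : Type) := At → Prop

/-- Valuations of the default atoms `not(p1 ∧ … ∧ pn)`, indexed by the list
`[p1, …, pn]` of atoms of the conjunction. -/
abbrev DefVal (At : Type) := List At → Prop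

/-- `Def`: the valuations of the default atoms making `not(true)`
(the empty conjunction case) false. -/
def DefSet (At : Type) : Set (DefVal At) := {d | ¬ d []}

/-- Satisfaction of a clause by a reduced interpretation `I_obj ∪ I_def`. -/
def satClause {At : Type} (Io : ObjVal At) (Id : DefVal At) (c : Clause At) : Prop :=
  ((∀ b ∈ c.posBody, Io b) ∧ (∀ C ∈ c.negBody, Id C)) → ∃ a ∈ c.head, Io a

/-- `I_obj ∪ I_def` is a model of the super program `P`. -/
def satProg {At : Type} (Io : ObjVal At) (Id : DefVal At) (P : Set (Clause At)) : Prop :=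
  ∀ c ∈ P, satClause Io Id c

/-- `I_obj ∪ I_def` is a minimal model of `P`: it is a model and no model with the
same default part has a strictly smaller set of true objective atoms. -/
def IsMinModelProg {At : Type} (P : Set (Clause At)) (Io : ObjVal At) (Id : DefVal At) : Prop :=
  satProg Io Id P ∧
  ∀ Io' : ObjVal At, satProg Io' Id P → ¬ ({a | Io' a} ⊂ {a | Io a})

/-- `I_def` is given by the set `O` of objective valuations:
`I_def ⊨ not(p1∧…∧pn)` iff every valuation in `O` satisfies `¬(p1∧…∧pn)`. -/
def givenBy {At : Type} (Id : DefVal At) (O : Set (ObjVal At)) : Prop :=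
  ∀ E : List At, Id E ↔ ∀ Io ∈ O, ∃ p ∈ E, ¬ Io p

/-- The operator `Φ_P`: objective parts of minimal models of `P` whose default part
belongs to `D`. -/
def PhiOp {At : Type} (P : Set (Clause At)) (D : Set (DefVal At)) : Set (ObjVal At) :=
  {Io | ∃ Id ∈ D, IsMinModelProg P Io Id}

/-- The operator `Ψ_P`: default valuations given by some nonempty subset of `O`
and extendable to a model of `P`. -/
def PsiOp {At : Type} (P : Set (Clause At)) (O : Set (ObjVal At)) : Set (DefVal At) :=
  {Id | Id ∈ DefSet At ∧
        (∃ O' ⊆ O, O'.Nonempty ∧ givenBy Id O') ∧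
        (∃ Io : ObjVal At, satProg Io Id P)}

/-- The operator `Λ_P := Ψ_P ∘ Φ_P`. -/
def LamOp {At : Type} (P : Set (Clause At)) : Set (DefVal At) → Set (DefVal At) :=
  PsiOp P ∘ PhiOp P

/-- The conjunction `p1 ∧ … ∧ pn` of a list of objective atoms
(the empty conjunction is `true`, a one-element list is just the atom). -/
def conjAtoms {At : Type} : List At → Fml At
  | [] => Fml.tru
  | [p] => Fml.atom p
  | p :: q :: ps => Fml.conj (Fml.atom p) (conjAtoms (q :: ps))

/-- Conjunction of a list of formulas. -/
def conjList {At : Type} : List (Fml At) → Fml At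
  | [] => Fml.tru
  | [F] => F
  | F :: G :: Gs => Fml.conj F (conjList (G :: Gs))

/-- Disjunction `p1 ∨ … ∨ pk` of a list of objective atoms (empty = `false`). -/
def disjAtoms {At : Type} : List At → Fml At
  | [] => Fml.fls
  | [p] => Fml.atom p
  | p :: q :: ps => Fml.disj (Fml.atom p) (disjAtoms (q :: ps))

/-- The default atom `not(p1 ∧ … ∧ pn)`, with `not(true)` (the case `n = 0`)
identified with `false`. -/
def notConj {At : Type} : List At → Fml At
  | [] => Fml.fls
  | p :: ps => Fml.not (conjAtoms (p :: ps))

/-- The formula of `L_not` corresponding to a program clause. -/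
def Clause.toFml {At : Type} (c : Clause At) : Fml At :=
  Fml.impl (conjList (c.posBody.map Fml.atom ++ c.negBody.map notConj))
    (disjAtoms c.head)

/-- The default part of the reduct of a full interpretation `I`:
its restriction to the default atoms `not(p1 ∧ … ∧ pn)`. -/
def reductDef {At : Type} (I : Interp At) : DefVal At :=
  fun E => I.dflt (conjAtoms E)

/-! ### Satisfaction of the formulas attached to a program -/

theorem sat_conjAtoms {At : Type} (I : Interp At) (E : List At) :
    I.sat (conjAtoms E) ↔ ∀ p ∈ E, I.obj p := by
  induction E with
  | nil => simp [conjAtoms, Interp.sat]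
  | cons p ps ih =>
    cases ps with
    | nil => simp [conjAtoms, Interp.sat]
    | cons q qs => simp only [conjAtoms, Interp.sat, ih, List.forall_mem_cons]

theorem sat_disjAtoms {At : Type} (I : Interp At) (E : List At) :
    I.sat (disjAtoms E) ↔ ∃ p ∈ E, I.obj p := by
  induction E with
  | nil => simp [disjAtoms, Interp.sat]
  | cons p ps ih =>
    cases ps with
    | nil => simp [disjAtoms, Interp.sat]
    | cons q qs => simp only [disjAtoms, Interp.sat, ih, List.exists_mem_cons_iff]

theorem sat_conjList {At : Type} (I : Interp At) (L : List (Fml At)) :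
    I.sat (conjList L) ↔ ∀ F ∈ L, I.sat F := by
  induction L with
  | nil => simp [conjList, Interp.sat]
  | cons p ps ih =>
    cases ps with
    | nil => simp [conjList]
    | cons q qs => simp only [conjList, Interp.sat, ih, List.forall_mem_cons]

/-- `notConj []` is `false` rather than `not(true)`; hence the hypothesis `hI`. -/
theorem sat_notConj {At : Type} (I : Interp At) (hI : ¬ I.dflt Fml.tru) (E : List At) :
    I.sat (notConj E) ↔ reductDef I E := by
  cases E with
  | nil => simpa [notConj, Interp.sat, reductDef, conjAtoms] using hI
  | cons p ps => simp [notConj, Interp.sat, reductDef]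

theorem sat_toFml {At : Type} (I : Interp At) (hI : ¬ I.dflt Fml.tru) (c : Clause At) :
    I.sat c.toFml ↔ satClause I.obj (reductDef I) c := by
  simp only [Clause.toFml, Interp.sat, sat_conjList, sat_disjAtoms, satClause,
    List.forall_mem_append, List.forall_mem_map, sat_notConj I hI]

theorem satTheory_toFml {At : Type} (P : Set (Clause At)) (I : Interp At)
    (hI : ¬ I.dflt Fml.tru) :
    I.satTheory (Clause.toFml '' P) ↔ satProg I.obj (reductDef I) P := by
  simp only [Interp.satTheory, satProg, Set.forall_mem_image, sat_toFml I hI]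

/-! ### The closure `CnNot` -/

theorem cnClosed_cnNot {At : Type} (T : Set (Fml At)) : CnClosed T (CnNot T) := by
  refine ⟨fun F hF S hS => hS.1 hF, fun S hS => hS.2.1, fun S hS => hS.2.2.1,
    fun F G S hS => hS.2.2.2.1 F G, fun F h S hS => hS.2.2.2.2.1 F fun I hI => h I ?_,
    fun F G h S hS => hS.2.2.2.2.2 F G (h S hS)⟩
  exact fun G hG => hI G (hG S hS)

theorem cnNot_subset {At : Type} {T S : Set (Fml At)} (h : CnClosed T S) : CnNot T ⊆ S :=
  fun _ hF => hF S h

theorem cnNot_mono {At : Type} {T T' : Set (Fml At)} (h : T ⊆ T') : CnNot T ⊆ CnNot T' :=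
  cnNot_subset ⟨h.trans (cnClosed_cnNot T').1, (cnClosed_cnNot T').2⟩

/-- Default atoms added to `T` put, after closure, no new constraint on the objective atoms: models
of `T` that share their default part with a model of the closure are models of the closure. -/
theorem CnNot.satTheory_of_dflt_eq {At : Type} {T X : Set (Fml At)}
    (hX : ∀ G ∈ X, ∃ F, G = Fml.not F) {M N : Interp At}
    (hM : M.satTheory (CnNot (T ∪ X))) (hd : N.dflt = M.dflt) (hN : N.satTheory T) :
    N.satTheory (CnNot (T ∪ X)) := by
  obtain ⟨h1, h2, h3, h4, h5, h6⟩ := cnClosed_cnNot (T ∪ X)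
  have key : CnClosed (T ∪ X) {F | ∀ M N : Interp At, M.satTheory (CnNot (T ∪ X)) →
      N.dflt = M.dflt → N.satTheory T → N.sat F} := by
    refine ⟨?_, ?_, ?_, ?_, ?_, ?_⟩
    · rintro G (hG | hG) M N hM hd hN
      · exact hN G hG
      · have hs := hM G (h1 (Or.inr hG))
        obtain ⟨F, rfl⟩ := hX G hG
        simpa [Interp.sat, hd] using hs
    · intro M N hM hd hN
      simpa [Interp.sat, hd] using hM _ h2
    · intro M N hM hd hN
      simpa [Interp.sat, hd] using hM _ h3
    · intro F G M N hM hd hN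
      simpa [Interp.sat, hd] using hM _ (h4 F G)
    · intro F hF M N hM hd hN
      exact hF N fun G hG => hG M N hM hd hN
    · intro F G hFG M N hM hd hN
      -- Models of the closure satisfy `T`, so `F ↔ G` already belongs to the closure.
      have hmem : Fml.equiv F G ∈ CnNot (T ∪ X) :=
        h5 _ fun I hI => hFG I I hI rfl fun H hH => hI H (h1 (Or.inl hH))
      simpa [Interp.sat, hd] using hM _ (h6 F G hmem)
  exact fun F hF => cnNot_subset key hF M N hM hd hN

/-! ### Static expansions as fixed points of a monotone operator -/

/-- `M` is minimal among the models of `T` with the same default part. -/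
def NoSmaller {At : Type} (T : Set (Fml At)) (M : Interp At) : Prop :=
  ∀ N : Interp At, N.satTheory T → ¬ Smaller N M

/-- The default atoms `not F` such that `¬F` holds in all models of `S` that are minimal with
respect to `T` (and not with respect to `S`, which makes this monotone in `S`). -/
def minNots {At : Type} (T S : Set (Fml At)) : Set (Fml At) :=
  {G | ∃ F : Fml At, (∀ M : Interp At, M.satTheory S → NoSmaller T M → M.sat (Fml.neg F)) ∧
    G = Fml.not F}

/-- The monotone operator `S ↦ Cn_not(T ∪ minNots T S)`. -/
def staticHom {At : Type} (T : Set (Fml At)) : Set (Fml At) →o Set (Fml At) where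
  toFun S := CnNot (T ∪ minNots T S)
  monotone' S S' h := cnNot_mono <| Set.union_subset_union_right T <| by
    rintro G ⟨F, hF, rfl⟩
    exact ⟨F, fun M hM => hF M fun H hH => hM H (h hH), rfl⟩

theorem cnClosed_of_staticHom_eq {At : Type} {T S : Set (Fml At)} (h : staticHom T S = S) :
    CnClosed (T ∪ minNots T S) S := by
  have hcl := cnClosed_cnNot (T ∪ minNots T S)
  rwa [show CnNot (T ∪ minNots T S) = S from h] at hcl

theorem isMinModel_cnNot_iff {At : Type} {T X : Set (Fml At)}
    (hX : ∀ G ∈ X, ∃ F, G = Fml.not F) (M : Interp At) :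
    IsMinModel (CnNot (T ∪ X)) M ↔ M.satTheory (CnNot (T ∪ X)) ∧ NoSmaller T M := by
  refine and_congr_right fun hM => ⟨fun h N hN hs => ?_, fun h N hN => h N ?_⟩
  · exact h N (CnNot.satTheory_of_dflt_eq hX hM hs.1 hN) hs
  · exact fun F hF => hN F ((cnClosed_cnNot _).1 (Or.inl hF))

theorem minNots_cnNot {At : Type} {T X : Set (Fml At)}
    (hX : ∀ G ∈ X, ∃ F, G = Fml.not F) :
    {G | ∃ F : Fml At, MinEntails (CnNot (T ∪ X)) (Fml.neg F) ∧ G = Fml.not F} =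
      minNots T (CnNot (T ∪ X)) := by
  simp only [minNots, MinEntails, isMinModel_cnNot_iff hX, and_imp]

theorem isStaticExpansion_iff {At : Type} (T S : Set (Fml At)) :
    IsStaticExpansion T S ↔ staticHom T S = S := by
  -- A fixed point of either operator is of the form to which `minNots_cnNot` applies.
  have key : ∀ X : Set (Fml At), (∀ G ∈ X, ∃ F, G = Fml.not F) → S = CnNot (T ∪ X) →
      {G | ∃ F : Fml At, MinEntails S (Fml.neg F) ∧ G = Fml.not F} = minNots T S := by
    rintro X hX rfl
    exact minNots_cnNot hX
  constructor
  · intro h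
    have hk := key _ (by rintro G ⟨F, -, rfl⟩; exact ⟨F, rfl⟩) h
    unfold IsStaticExpansion at h
    rw [hk] at h
    exact h.symm
  · intro h
    have hk := key _ (by rintro G ⟨F, -, rfl⟩; exact ⟨F, rfl⟩) h.symm
    unfold IsStaticExpansion
    rw [hk]
    exact h.symm

theorem IsLeastStaticExpansion.subset_of_le {At : Type} {T Tbar S : Set (Fml At)}
    (h : IsLeastStaticExpansion T Tbar) (hS : staticHom T S ⊆ S) : Tbar ⊆ S :=
  (h.2 _ ((isStaticExpansion_iff T _).2 (staticHom T).map_lfp)).trans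
    ((staticHom T).lfp_le hS)

/-! ### Models of the expansion reduce into the iterates -/

/-- Disjunction of a list of formulas. -/
def bigDisj {At : Type} : List (Fml At) → Fml At
  | [] => Fml.fls
  | F :: L => Fml.disj F (bigDisj L)

theorem sat_bigDisj {At : Type} (I : Interp At) (L : List (Fml At)) :
    I.sat (bigDisj L) ↔ ∃ F ∈ L, I.sat F := by
  induction L with
  | nil => simp [bigDisj, Interp.sat]
  | cons F L ih => simp only [bigDisj, Interp.sat, ih, List.exists_mem_cons_iff]

theorem CnClosed.dflt_disj {At : Type} {T S : Set (Fml At)} (hS : CnClosed T S)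
    {I : Interp At} (hI : I.satTheory S) (F G : Fml At) :
    I.dflt (Fml.disj F G) ↔ I.dflt F ∧ I.dflt G := by
  simpa [Interp.sat] using hI _ (hS.2.2.2.1 F G)

theorem CnClosed.dflt_bigDisj {At : Type} {T S : Set (Fml At)} (hS : CnClosed T S)
    {I : Interp At} (hI : I.satTheory S) (L : List (Fml At)) :
    I.dflt (bigDisj L) ↔ ∀ F ∈ L, I.dflt F := by
  induction L with
  | nil => simpa [bigDisj, Interp.sat] using hI _ hS.2.1
  | cons F L ih => simp only [bigDisj, hS.dflt_disj hI, ih, List.forall_mem_cons]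

/-- From `not(F ∧ ¬G)` and `not G` infer `not F`, as `(F ∧ ¬G) ∨ G` is equivalent to `F ∨ G`. -/
theorem CnClosed.dflt_of_conj_neg {At : Type} {T S : Set (Fml At)} (hS : CnClosed T S)
    {I : Interp At} (hI : I.satTheory S) {F G : Fml At}
    (h : I.dflt (Fml.conj F (Fml.neg G))) (hG : I.dflt G) : I.dflt F := by
  have heq : Fml.equiv (Fml.disj (Fml.conj F (Fml.neg G)) G) (Fml.disj F G) ∈ S :=
    hS.2.2.2.2.1 _ fun J _ => by simp only [Interp.sat]; tauto
  have h2 := hI _ (hS.2.2.2.2.2 _ _ heq)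
  simp only [Interp.sat, hS.dflt_disj hI] at h2
  exact (h2.1 ⟨h, hG⟩).1

theorem isMinModelProg_of_noSmaller {At : Type} {P : Set (Clause At)} {M : Interp At}
    (ht : ¬ M.dflt Fml.tru) (hM : M.satTheory (Clause.toFml '' P))
    (hmin : NoSmaller (Clause.toFml '' P) M) :
    IsMinModelProg P M.obj (reductDef M) :=
  ⟨(satTheory_toFml P M ht).1 hM, fun Io' h hlt =>
    hmin ⟨Io', M.dflt⟩ ((satTheory_toFml P ⟨Io', M.dflt⟩ ht).2 h) ⟨rfl, hlt⟩⟩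

/-- One step of the induction: `D` may be replaced by `Λ_P(D)`. -/
theorem reductDef_mem_lamOp {At : Type} [Finite At] {P : Set (Clause At)} {S : Set (Fml At)}
    (hS : staticHom (Clause.toFml '' P) S = S) {D : Set (DefVal At)}
    (hD : ∀ I : Interp At, I.satTheory S → reductDef I ∈ D)
    (I : Interp At) (hI : I.satTheory S) : reductDef I ∈ LamOp P D := by
  have hcl := cnClosed_of_staticHom_eq hS
  have htru : ∀ M : Interp At, M.satTheory S → ¬ M.dflt Fml.tru := fun M hM => by
    simpa [Interp.sat] using hM _ hcl.2.2.1
  have hT : ∀ M : Interp At, M.satTheory S → M.satTheory (Clause.toFml '' P) :=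
    fun M hM F hF => hM F (hcl.1 (Or.inl hF))
  have main : ∀ E : List At, ¬ reductDef I E → ∃ Io ∈ PhiOp P D,
      (∀ E' : List At, reductDef I E' → ∃ p ∈ E', ¬ Io p) ∧ ∀ p ∈ E, Io p := by
    intro E hE
    by_contra! hcon
    choose! f hf using fun (Io : ObjVal At) (h : Io ∈ PhiOp P D ∧ ∀ p ∈ E, Io p) =>
      (show ∃ E', reductDef I E' ∧ ∀ p ∈ E', Io p by
        by_contra! h'
        obtain ⟨p, hp, hn⟩ := hcon Io h.1 h'
        exact hn (h.2 p hp))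
    -- There are finitely many valuations, so the chosen conjunctions have a disjunction.
    have hfin : {Io : ObjVal At | Io ∈ PhiOp P D ∧ ∀ p ∈ E, Io p}.Finite := Set.toFinite _
    let L : List (Fml At) := hfin.toFinset.toList.map fun Io => conjAtoms (f Io)
    have hnot : Fml.not (Fml.conj (conjAtoms E) (Fml.neg (bigDisj L))) ∈ S := by
      refine hcl.1 (Or.inr ⟨_, fun M hM hmin => ?_, rfl⟩)
      simp only [Interp.sat, sat_conjAtoms, not_and, not_not, sat_bigDisj]
      intro hME
      have hmem : M.obj ∈ PhiOp P D ∧ ∀ p ∈ E, M.obj p :=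
        ⟨⟨reductDef M, hD M hM, isMinModelProg_of_noSmaller (htru M hM) (hT M hM) hmin⟩, hME⟩
      refine ⟨conjAtoms (f M.obj), List.mem_map.2 ⟨M.obj, ?_, rfl⟩,
        (sat_conjAtoms M _).2 (hf _ hmem).2⟩
      simpa using hmem
    refine hE (hcl.dflt_of_conj_neg hI (hI _ hnot) ((hcl.dflt_bigDisj hI L).2 ?_))
    intro F hF
    obtain ⟨Io, hIo, rfl⟩ := List.mem_map.1 hF
    exact (hf Io (by simpa using hIo)).1
  refine ⟨htru I hI, ⟨{Io ∈ PhiOp P D | ∀ E', reductDef I E' → ∃ p ∈ E', ¬ Io p},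
    fun _ h => h.1, ?_, fun E => ⟨fun hE Io hIo => hIo.2 E hE, fun h => ?_⟩⟩, I.obj,
    (satTheory_toFml P I (htru I hI)).1 (hT I hI)⟩
  · -- Apply `main` to the empty conjunction, whose default atom `not(true)` is false.
    obtain ⟨Io, h1, h2, -⟩ := main [] (htru I hI)
    exact ⟨Io, h1, h2⟩
  · by_contra hE
    obtain ⟨Io, h1, h2, h3⟩ := main E hE
    obtain ⟨p, hp, hn⟩ := h Io ⟨h1, h2⟩
    exact hn (h3 p hp)

/-! ### The Kripke structure on a fixed point -/

/-- Truth of a formula at the world `(Io, Id)`. The worlds seen from it are the pairs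
`(Io', ch Io')` with `Io' ∈ acc Id`, and `not F` holds if `F` fails in all of them. -/
def worldSat {At : Type} (acc : DefVal At → Set (ObjVal At)) (ch : ObjVal At → DefVal At) :
    Fml At → ObjVal At → DefVal At → Prop
  | Fml.atom a, Io, _ => Io a
  | Fml.tru, _, _ => True
  | Fml.fls, _, _ => False
  | Fml.neg F, Io, Id => ¬ worldSat acc ch F Io Id
  | Fml.conj F G, Io, Id => worldSat acc ch F Io Id ∧ worldSat acc ch G Io Id
  | Fml.disj F G, Io, Id => worldSat acc ch F Io Id ∨ worldSat acc ch G Io Id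
  | Fml.impl F G, Io, Id => worldSat acc ch F Io Id → worldSat acc ch G Io Id
  | Fml.equiv F G, Io, Id => (worldSat acc ch F Io Id ↔ worldSat acc ch G Io Id)
  | Fml.not F, _, Id => ∀ Io' ∈ acc Id, ¬ worldSat acc ch F Io' (ch Io')

/-- The full interpretation attached to the world `(Io, Id)`. -/
def worldInterp {At : Type} (acc : DefVal At → Set (ObjVal At)) (ch : ObjVal At → DefVal At)
    (Io : ObjVal At) (Id : DefVal At) : Interp At :=
  ⟨Io, fun F => worldSat acc ch (Fml.not F) Io Id⟩

theorem sat_worldInterp {At : Type} (acc : DefVal At → Set (ObjVal At))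
    (ch : ObjVal At → DefVal At) (F : Fml At) (Io : ObjVal At) (Id : DefVal At) :
    (worldInterp acc ch Io Id).sat F ↔ worldSat acc ch F Io Id := by
  induction F with
  | not F => rfl
  | atom a => rfl
  | tru => rfl
  | fls => rfl
  | neg F ih => simp only [Interp.sat, worldSat, ih]
  | conj F G ihF ihG => simp only [Interp.sat, worldSat, ihF, ihG]
  | disj F G ihF ihG => simp only [Interp.sat, worldSat, ihF, ihG]
  | impl F G ihF ihG => simp only [Interp.sat, worldSat, ihF, ihG]
  | equiv F G ihF ihG => simp only [Interp.sat, worldSat, ihF, ihG]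

theorem worldInterp_dflt {At : Type} (acc : DefVal At → Set (ObjVal At))
    (ch : ObjVal At → DefVal At) (F : Fml At) (Io : ObjVal At) (Id : DefVal At) :
    (worldInterp acc ch Io Id).dflt F ↔
      ∀ Io' ∈ acc Id, ¬ (worldInterp acc ch Io' (ch Io')).sat F := by
  simp only [sat_worldInterp]
  rfl

theorem reductDef_worldInterp {At : Type} {acc : DefVal At → Set (ObjVal At)}
    {ch : ObjVal At → DefVal At} {Id : DefVal At} (h : givenBy Id (acc Id)) (Io : ObjVal At) :
    reductDef (worldInterp acc ch Io Id) = Id := by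
  funext E
  refine propext ?_
  rw [h E, reductDef, worldInterp_dflt]
  simp only [sat_conjAtoms, not_forall, exists_prop]
  rfl

/-- Every model of `P` with default part in a post-fixed point of `Λ_P` is the reduct of a model of
the least static expansion. -/
theorem exists_model_of_mem {At : Type} {P : Set (Clause At)} {S : Set (Fml At)}
    (hS : IsLeastStaticExpansion (Clause.toFml '' P) S) {D : Set (DefVal At)}
    (hD : D ⊆ LamOp P D) {Io : ObjVal At} {Id : DefVal At} (hId : Id ∈ D)
    (hP : satProg Io Id P) :
    ∃ I : Interp At, I.satTheory S ∧ Io = I.obj ∧ Id = reductDef I := by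
  choose! acc hacc hne hgiven using fun (d : DefVal At) (h : d ∈ D) => (hD h).2.1
  choose! ch hch hmin using fun (o : ObjVal At) (h : o ∈ PhiOp P D) => h
  have hred : ∀ d ∈ D, ∀ o, reductDef (worldInterp acc ch o d) = d :=
    fun d hd o => reductDef_worldInterp (hgiven d hd) o
  have htru : ∀ d ∈ D, ∀ o, ¬ (worldInterp acc ch o d).dflt Fml.tru := by
    intro d hd o
    have := (hD hd).1
    rw [← hred d hd o] at this
    exact this
  have hworld : ∀ d ∈ D, ∀ o ∈ acc d, ch o ∈ D ∧ satProg o (ch o) P := fun d hd o ho =>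
    ⟨hch o (hacc d hd ho), (hmin o (hacc d hd ho)).1⟩
  have hsub : S ⊆ {F | ∀ d ∈ D, ∀ o, satProg o d P → (worldInterp acc ch o d).sat F} := by
    refine hS.subset_of_le (cnNot_subset ⟨?_, ?_, ?_, ?_, ?_, ?_⟩)
    · rintro G (hG | ⟨F, hF, rfl⟩) d hd o ho
      · refine (satTheory_toFml P _ (htru d hd o)).2 ?_ G hG
        rw [hred d hd o]
        exact ho
      · refine (worldInterp_dflt acc ch F o d).2 fun o' ho' => ?_
        obtain ⟨h1, h2⟩ := hworld d hd o' ho'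
        refine hF _ (fun G hG => hG _ h1 _ h2) fun N hN hlt => ?_
        -- A smaller model of the theory would give a smaller model of `P`.
        have hNd : reductDef N = ch o' := by
          rw [← hred _ h1 o']
          funext E
          exact congrFun hlt.1 _
        have hNt : ¬ N.dflt Fml.tru := by
          rw [hlt.1]
          exact htru _ h1 o'
        refine (hmin o' (hacc d hd ho')).2 N.obj ?_ hlt.2
        rw [← hNd]
        exact (satTheory_toFml P N hNt).1 hN
    · intro d hd o ho
      exact (worldInterp_dflt acc ch _ o d).2 fun _ _ h => h
    · intro d hd o ho
      exact htru d hd o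
    · intro F G d hd o ho
      simp only [Interp.sat, worldInterp_dflt, not_or]
      exact ⟨fun h => ⟨fun x hx => (h x hx).1, fun x hx => (h x hx).2⟩,
        fun h x hx => ⟨h.1 x hx, h.2 x hx⟩⟩
    · intro F hF d hd o ho
      exact hF _ fun G hG => hG d hd o ho
    · intro F G hFG d hd o ho
      simp only [Interp.sat, worldInterp_dflt]
      refine forall₂_congr fun o' ho' => not_congr ?_
      obtain ⟨h1, h2⟩ := hworld d hd o' ho'
      exact hFG _ h1 _ h2
  exact ⟨worldInterp acc ch Io Id, fun F hF => hsub hF Id hId Io hP, rfl, (hred Id hId Io).symm⟩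

/-- Let `P` be a finite super logic program with least static expansion `Pbar`, and
`N_P = Λ_P^[k](Def)` the fixed point of the iteration of `Λ_P` starting from `Def`.
A reduced interpretation `I_obj ∪ I_def` is the reduct of some full model of `Pbar`
iff `I_def ∈ N_P` and `I_obj ∪ I_def` is a model of `P`. -/
theorem reduct_model_characterization {At : Type} [Finite At]
    (P : Set (Clause At)) (hPfin : P.Finite)
    (Pbar : Set (Fml At)) (hbar : IsLeastStaticExpansion (Clause.toFml '' P) Pbar)
    (k : ℕ) (hfix : (LamOp P)^[k + 1] (DefSet At) = (LamOp P)^[k] (DefSet At))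
    (Io : ObjVal At) (Id : DefVal At) (hId : Id ∈ DefSet At) :
    (∃ I : Interp At, I.satTheory Pbar ∧ Io = I.obj ∧ Id = reductDef I) ↔
      (Id ∈ (LamOp P)^[k] (DefSet At) ∧ satProg Io Id P) := by
  have hS := (isStaticExpansion_iff _ _).1 hbar.1
  have hcl := cnClosed_of_staticHom_eq hS
  have htru : ∀ I : Interp At, I.satTheory Pbar → ¬ I.dflt Fml.tru := fun I hI => by
    simpa [Interp.sat] using hI _ hcl.2.2.1
  constructor
  · rintro ⟨I, hI, rfl, rfl⟩
    refine ⟨?_, (satTheory_toFml P I (htru I hI)).1 fun F hF => hI F (hcl.1 (Or.inl hF))⟩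
    have hiter : ∀ j, ∀ I : Interp At, I.satTheory Pbar →
        reductDef I ∈ (LamOp P)^[j] (DefSet At) := by
      intro j
      induction j with
      | zero => exact htru
      | succ j ih =>
        intro I hI
        rw [Function.iterate_succ_apply']
        exact reductDef_mem_lamOp hS ih I hI
    exact hiter k I hI
  · rintro ⟨hmem, hP⟩
    rw [Function.iterate_succ_apply'] at hfix
    exact exists_model_of_mem hbar hfix.ge hmem hP
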